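/- There is no ATLorig formula that is equivalent, over all concurrent game structures (i.e., true at exactly the same locations of every CGS), to the ATL formula ⟨A⟩(a R b) — equivalently, to ⟨A⟩(b R (a ∨ b)) = ⟨A⟩(a W b) — where a, b are atomic propositions and A is a coalition. -/

import Mathlib

/-!  Core formalization of concurrent game structures (CGS), alternating
transition systems (ATS), and the logic ATL, following Alur-Henzinger-Kupferman
and Laroussinie-Markey-Oreiby, "On the Expressiveness and Complexity of ATL".

A generic "game structure" `GS Agt Loc P M` has locations labelled by atomic
propositions from `P`, and in each location each agent has a set of available
moves (of type `M`); a joint move (one move per agent) leads to a set of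
possible successor locations (a singleton for CGSs, the intersection of the
chosen sets for ATSs). -/

structure GS (Agt Loc P M : Type) where
  lab : Loc → Set P
  mov : Loc → Agt → Set M
  step : Loc → (Agt → M) → Set Loc

namespace GS

variable {Agt Loc P M : Type}

/-- a complete joint move, valid at `ℓ`. -/
def ValidMove (S : GS Agt Loc P M) (ℓ : Loc) (m : Agt → M) : Prop :=
  ∀ a, m a ∈ S.mov ℓ a

/-- `Next ℓ A mA`: locations reachable from `ℓ` when each member `a` of the
coalition `A` plays `mA a` (and the other agents play arbitrary valid moves). -/
def Next (S : GS Agt Loc P M) (ℓ : Loc) (A : Set Agt) (mA : Agt → M) : Set Loc :=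
  {ℓ' | ∃ m, S.ValidMove ℓ m ∧ (∀ a ∈ A, m a = mA a) ∧ ℓ' ∈ S.step ℓ m}

/-- all possible successors of `ℓ`. -/
def NextAll (S : GS Agt Loc P M) (ℓ : Loc) : Set Loc :=
  {ℓ' | ∃ m, S.ValidMove ℓ m ∧ ℓ' ∈ S.step ℓ m}

/-- the controllable predecessors: `ℓ ∈ CPre A T` iff coalition `A` has a move
forcing the next location to be in `T`. -/
def CPre (S : GS Agt Loc P M) (A : Set Agt) (T : Set Loc) : Set Loc :=
  {ℓ | ∃ mA : Agt → M, (∀ a ∈ A, mA a ∈ S.mov ℓ a) ∧ S.Next ℓ A mA ⊆ T}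

theorem cpre_mono (S : GS Agt Loc P M) (A : Set Agt) : Monotone (S.CPre A) := by
  intro T T' h ℓ hℓ
  obtain ⟨mA, hv, hn⟩ := hℓ
  exact ⟨mA, hv, hn.trans h⟩

/-- A strategy maps the (strict) past history and current location to a move
for each agent (only the moves of the coalition members are relevant). -/
def Strat (Agt Loc M : Type) : Type := List Loc → Loc → Agt → M

def StratValid (S : GS Agt Loc P M) (A : Set Agt) (F : Strat Agt Loc M) : Prop :=
  ∀ h ℓ a, a ∈ A → F h ℓ a ∈ S.mov ℓ a

/-- a strategy is memoryless (state-based) if it only depends on the current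
location. -/
def Memoryless (F : Strat Agt Loc M) : Prop :=
  ∀ h h' ℓ a, F h ℓ a = F h' ℓ a

/-- the history `ρ 0, …, ρ (i-1)`. -/
def hist (ρ : ℕ → Loc) (i : ℕ) : List Loc := List.ofFn (fun j : Fin i => ρ j)

/-- computations from `ℓ`. -/
def Comp (S : GS Agt Loc P M) (ℓ : Loc) (ρ : ℕ → Loc) : Prop :=
  ρ 0 = ℓ ∧ ∀ i, ρ (i + 1) ∈ S.NextAll (ρ i)

/-- the outcomes of a strategy `F` of coalition `A` from `ℓ`. -/
def Out (S : GS Agt Loc P M) (A : Set Agt) (ℓ : Loc) (F : Strat Agt Loc M)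
    (ρ : ℕ → Loc) : Prop :=
  ρ 0 = ℓ ∧ ∀ i, ρ (i + 1) ∈ S.Next (ρ i) A (F (hist ρ i) (ρ i))

end GS

/-! ### ATL syntax and semantics -/

mutual
  /-- ATL state formulas. -/
  inductive SForm (Agt P : Type) : Type where
    | tru : SForm Agt P
    | atom : P → SForm Agt P
    | snot : SForm Agt P → SForm Agt P
    | sor : SForm Agt P → SForm Agt P → SForm Agt P
    | coal : Set Agt → PForm Agt P → SForm Agt P
  /-- ATL path formulas. -/
  inductive PForm (Agt P : Type) : Type where
    | pnot : PForm Agt P → PForm Agt P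
    | nxt : SForm Agt P → PForm Agt P
    | untl : SForm Agt P → SForm Agt P → PForm Agt P
end

mutual
  /-- satisfaction of an ATL state formula at a location. -/
  def SSat {Agt Loc P M : Type} (S : GS Agt Loc P M) : SForm Agt P → Loc → Prop
    | .tru, _ => True
    | .atom p, ℓ => p ∈ S.lab ℓ
    | .snot φ, ℓ => ¬ SSat S φ ℓ
    | .sor φ ψ, ℓ => SSat S φ ℓ ∨ SSat S ψ ℓ
    | .coal A φ, ℓ =>
        ∃ F : GS.Strat Agt Loc M, S.StratValid A F ∧
          ∀ ρ : ℕ → Loc, S.Out A ℓ F ρ → PSat S φ ρ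
  /-- satisfaction of an ATL path formula along a sequence of locations. -/
  def PSat {Agt Loc P M : Type} (S : GS Agt Loc P M) : PForm Agt P → (ℕ → Loc) → Prop
    | .pnot φ, ρ => ¬ PSat S φ ρ
    | .nxt φ, ρ => SSat S φ (ρ 1)
    | .untl φ ψ, ρ => ∃ i, SSat S ψ (ρ i) ∧ ∀ j < i, SSat S φ (ρ j)
end

/-- the release modality:  `φ R ψ := ¬((¬φ) U (¬ψ))`. -/
def PForm.rel {Agt P : Type} (φ ψ : SForm Agt P) : PForm Agt P :=
  .pnot (.untl φ.snot ψ.snot)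

/-- the weak-until modality:  `φ W ψ := ψ R (φ ∨ ψ)`. -/
def PForm.wuntl {Agt P : Type} (φ ψ : SForm Agt P) : PForm Agt P :=
  PForm.rel ψ (φ.sor ψ)

/-- conjunction of state formulas. -/
def SForm.sand {Agt P : Type} (φ ψ : SForm Agt P) : SForm Agt P :=
  .snot (.sor φ.snot ψ.snot)

/-- the set of locations satisfying a state formula. -/
def SatSet {Agt Loc P M : Type} (S : GS Agt Loc P M) (φ : SForm Agt P) : Set Loc :=
  {ℓ | SSat S φ ℓ}

/-! ### Concurrent game structures (explicit) and alternating transition systems -/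

/-- an (explicit) concurrent game structure: moves are natural numbers, and the
transition table gives the successor of each joint move. -/
structure CGS (Agt Loc P : Type) where
  lab : Loc → Set P
  chc : Loc → Agt → Finset ℕ
  edg : Loc → (Agt → ℕ) → Loc

namespace CGS

variable {Agt Loc P : Type}

def WellFormed (G : CGS Agt Loc P) : Prop := ∀ ℓ a, (G.chc ℓ a).Nonempty

def toGS (G : CGS Agt Loc P) : GS Agt Loc P ℕ where
  lab := G.lab
  mov ℓ a := ↑(G.chc ℓ a)
  step ℓ m := {G.edg ℓ m}

/-- a CGS is turn-based if in every location at most one agent has more than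
one available move. -/
def TurnBased (G : CGS Agt Loc P) : Prop :=
  ∀ ℓ (a b : Agt), 1 < (G.chc ℓ a).card → 1 < (G.chc ℓ b).card → a = b

end CGS

/-- an alternating transition system: a move of an agent is a set of locations;
a joint move leads to the intersection of the chosen sets (a singleton when the
ATS is well-formed). -/
structure ATS (Agt Loc P : Type) where
  lab : Loc → Set P
  chc : Loc → Agt → Set (Set Loc)

namespace ATS

variable {Agt Loc P : Type}

/-- well-formedness: each agent always has some available move, and each joint
choice of moves intersects in a singleton. -/
def WellFormed (T : ATS Agt Loc P) : Prop :=
  (∀ ℓ a, (T.chc ℓ a).Nonempty) ∧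
  ∀ ℓ (Q : Agt → Set Loc), (∀ a, Q a ∈ T.chc ℓ a) → ∃ ℓ', (⋂ a, Q a) = {ℓ'}

def toGS (T : ATS Agt Loc P) : GS Agt Loc P (Set Loc) where
  lab := T.lab
  mov := T.chc
  step _ Q := ⋂ a, Q a

end ATS

/-! ### The original ATL fragment (path modalities X, G, U only, no path negation) -/

/-- formulas of ATLorig: state formulas built from atoms, boolean connectives
and the modalities `⟨A⟩X`, `⟨A⟩G`, `⟨A⟩U`. -/
inductive OForm (Agt P : Type) : Type where
  | tru : OForm Agt P
  | atom : P → OForm Agt P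
  | onot : OForm Agt P → OForm Agt P
  | oor : OForm Agt P → OForm Agt P → OForm Agt P
  | coalX : Set Agt → OForm Agt P → OForm Agt P
  | coalG : Set Agt → OForm Agt P → OForm Agt P
  | coalU : Set Agt → OForm Agt P → OForm Agt P → OForm Agt P

namespace OForm

variable {Agt P : Type}

/-- size of the syntax tree of an ATLorig formula. -/
def size : OForm Agt P → ℕ
  | .tru => 1
  | .atom _ => 1
  | .onot φ => 1 + φ.size
  | .oor φ ψ => 1 + φ.size + ψ.size
  | .coalX _ φ => 2 + φ.size
  | .coalG _ φ => 2 + φ.size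
  | .coalU _ φ ψ => 2 + φ.size + ψ.size

/-- an ATLorig formula is in particular an ATL formula
(`⟨A⟩G φ` is `⟨A⟩¬(⊤ U ¬φ)`). -/
def toS : OForm Agt P → SForm Agt P
  | .tru => .tru
  | .atom p => .atom p
  | .onot φ => .snot φ.toS
  | .oor φ ψ => .sor φ.toS ψ.toS
  | .coalX A φ => .coal A (.nxt φ.toS)
  | .coalG A φ => .coal A (.pnot (.untl .tru (.snot φ.toS)))
  | .coalU A φ ψ => .coal A (.untl φ.toS ψ.toS)

end OForm

/-- satisfaction of an ATLorig formula. -/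
def OSat {Agt Loc P M : Type} (S : GS Agt Loc P M) (θ : OForm Agt P) (ℓ : Loc) : Prop :=
  SSat S θ.toS ℓ

/-! The structures separating the two logics are chains of `N` stages above a losing sink, together
with a goal location that leads to the sink; `b` holds everywhere but in the sink, `a` only at the
goal. At each stage the proponent picks a row and the opponent a column of the matrix with rows
`(self, sink)` and `(previous stage, goal)`; the last stage alone offers the extra row
`(self, goal)`. Looping on that row realises `a R b` from the last stage, while from every other
stage the opponent drives the play down to the sink. An `X`, `U` or `G` modality gains nothing from
the extra row: in a least fixed point a location never owes its membership to its own self-loop, in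
a greatest fixed point the self-loop is free and the goal is no better than the sink. Hence the
truth value at a stage is a fixed monotone function of that at the previous stage, and monotone
functions `Prop → Prop` are idempotent, so each modality lets formulas distinguish only one more
stage. -/

theorem monotone_prop_idempotent {f : Prop → Prop} (hf : Monotone f) (p : Prop) :
    f (f p) ↔ f p := by
  by_cases h : f p
  · simpa only [h, iff_true] using hf (show p ≤ True from fun _ => trivial) h
  · simpa only [h, iff_false] using mt (hf (show False ≤ p from False.elim)) h

section FixedPoints

variable {X : Type*} (f : Set X →o Set X) {x : X}

theorem mem_lfp_iff_mem_map_diff_singleton : x ∈ f.lfp ↔ x ∈ f (f.lfp \ {x}) := by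
  have map_diff_le : f (f.lfp \ {x}) ≤ f.lfp :=
    (f.monotone Set.sdiff_subset).trans f.map_lfp.le
  refine ⟨fun hx => ?_, fun hx => map_diff_le hx⟩
  by_contra hxf
  have lfp_le_diff : f.lfp ≤ f.lfp \ {x} :=
    f.lfp_le fun y hy => ⟨map_diff_le hy, fun hyx => hxf (hyx ▸ hy)⟩
  exact (lfp_le_diff hx).2 rfl

theorem mem_gfp_iff_mem_map_insert : x ∈ f.gfp ↔ x ∈ f (insert x f.gfp) := by
  have gfp_le_map_insert : f.gfp ≤ f (insert x f.gfp) :=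
    f.map_gfp.ge.trans (f.monotone (Set.subset_insert x f.gfp))
  refine ⟨fun hx => gfp_le_map_insert hx, fun hx => ?_⟩
  have insert_le_gfp : insert x f.gfp ≤ f.gfp :=
    f.le_gfp (Set.insert_subset hx gfp_le_map_insert)
  exact insert_le_gfp (Set.mem_insert x _)

end FixedPoints

namespace GS

variable {Agt Loc P M : Type} {S : GS Agt Loc P M} {A : Set Agt}

/-- A game structure is serial if every agent always has a move and every joint move has a
successor; in a serial structure coalitions have strategies and strategies have outcomes. -/
structure Serial (S : GS Agt Loc P M) : Prop where
  mov_nonempty : ∀ ℓ a, (S.mov ℓ a).Nonempty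
  step_nonempty : ∀ ℓ m, S.ValidMove ℓ m → (S.step ℓ m).Nonempty

/-- The locations from which `A` has a strategy all of whose outcomes lie in the set of paths `Q`:
the semantics of `⟨A⟩` for an arbitrary path property. -/
def Enforce (S : GS Agt Loc P M) (A : Set Agt) (Q : Set (ℕ → Loc)) : Set Loc :=
  {ℓ | ∃ F : Strat Agt Loc M, S.StratValid A F ∧ ∀ ρ, S.Out A ℓ F ρ → ρ ∈ Q}

/-- The path without its initial location. -/
def tail (ρ : ℕ → Loc) : ℕ → Loc := fun i => ρ (i + 1)

/-- The paths satisfying `p U q`, for state properties given as sets of locations. -/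
def untilPaths (p q : Set Loc) : Set (ℕ → Loc) := {ρ | ∃ i, ρ i ∈ q ∧ ∀ j < i, ρ j ∈ p}

/-- The paths satisfying `q R p`, for state properties given as sets of locations. -/
def releasePaths (q p : Set Loc) : Set (ℕ → Loc) := (untilPaths qᶜ pᶜ)ᶜ

/-- The operator `T ↦ q ∪ (p ∩ CPre A T)`, whose least fixed point is `⟨A⟩(p U q)`. -/
def untilStep (S : GS Agt Loc P M) (A : Set Agt) (p q : Set Loc) : Set Loc →o Set Loc where
  toFun T := q ∪ p ∩ S.CPre A T
  monotone' _ _ h :=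
    Set.union_subset_union_right q (Set.inter_subset_inter_right p (S.cpre_mono A h))

/-- The operator `T ↦ p ∩ (q ∪ CPre A T)`, whose greatest fixed point is `⟨A⟩(q R p)`. -/
def releaseStep (S : GS Agt Loc P M) (A : Set Agt) (q p : Set Loc) : Set Loc →o Set Loc where
  toFun T := p ∩ (q ∪ S.CPre A T)
  monotone' _ _ h :=
    Set.inter_subset_inter_right p (Set.union_subset_union_right q (S.cpre_mono A h))

theorem hist_succ (ρ : ℕ → Loc) (i : ℕ) : hist ρ (i + 1) = hist ρ i ++ [ρ i] := by
  simp only [hist, List.ofFn_succ_last, Fin.val_castSucc, Fin.val_last]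

theorem hist_succ_eq_cons_tail (ρ : ℕ → Loc) (i : ℕ) :
    hist ρ (i + 1) = ρ 0 :: hist (tail ρ) i := by
  simp only [hist, List.ofFn_succ, Fin.val_zero, Fin.val_succ, tail]

theorem headD_hist (ρ : ℕ → Loc) (i : ℕ) : (hist ρ i).headD (ρ i) = ρ 0 := by
  cases i with
  | zero => rfl
  | succ i => rw [hist_succ_eq_cons_tail, List.headD_cons]

theorem out_iff_out_tail {ℓ : Loc} {F : Strat Agt Loc M} {ρ : ℕ → Loc} :
    S.Out A ℓ F ρ ↔ ρ 0 = ℓ ∧ ρ 1 ∈ S.Next ℓ A (F [] ℓ) ∧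
      S.Out A (ρ 1) (fun h => F (ℓ :: h)) (tail ρ) := by
  constructor
  · rintro ⟨rfl, hρ⟩
    refine ⟨rfl, hρ 0, rfl, fun i => ?_⟩
    simpa only [hist_succ_eq_cons_tail, tail] using hρ (i + 1)
  · rintro ⟨rfl, h_next, -, h_tail⟩
    refine ⟨rfl, fun i => ?_⟩
    cases i with
    | zero => exact h_next
    | succ i => simpa only [hist_succ_eq_cons_tail, tail] using h_tail i

theorem exists_out_of_forall_exists_next {F : Strat Agt Loc M} {R : Loc → Loc → Prop}
    (hF : ∀ h x, ∃ y ∈ S.Next x A (F h x), R x y) (ℓ : Loc) :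
    ∃ ρ, S.Out A ℓ F ρ ∧ ∀ i, R (ρ i) (ρ (i + 1)) := by
  choose succ h_next h_rel using hF
  let run : ℕ → List Loc × Loc := fun i =>
    Nat.rec ([], ℓ) (fun _ s => (s.1 ++ [s.2], succ s.1 s.2)) i
  let ρ : ℕ → Loc := fun i => (run i).2
  have hist_run (i : ℕ) : hist ρ i = (run i).1 := by
    induction i with
    | zero => rfl
    | succ i ih => rw [hist_succ, ih]
  refine ⟨ρ, ⟨rfl, fun i => ?_⟩, fun i => h_rel _ _⟩
  rw [hist_run]
  exact h_next _ _

theorem enforce_preimage_tail_subset (A : Set Agt) (Q : Set (ℕ → Loc)) :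
    S.Enforce A (tail ⁻¹' Q) ⊆ S.CPre A (S.Enforce A Q) := by
  rintro ℓ ⟨F, hF, hQ⟩
  refine ⟨F [] ℓ, hF [] ℓ, fun x hx => ⟨fun h => F (ℓ :: h), fun h => hF _, ?_⟩⟩
  rintro ρ ⟨rfl, hρ⟩
  let ℓρ : ℕ → Loc := fun i => Nat.casesOn i ℓ ρ
  have out_ℓρ : S.Out A ℓ F ℓρ := out_iff_out_tail.2 ⟨rfl, hx, rfl, hρ⟩
  exact hQ ℓρ out_ℓρ

namespace Serial

theorem exists_validMove_eqOn (hS : S.Serial) {ℓ : Loc} {mA : Agt → M}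
    (hmA : ∀ a ∈ A, mA a ∈ S.mov ℓ a) :
    ∃ m, S.ValidMove ℓ m ∧ ∀ a ∈ A, m a = mA a := by
  classical
  refine ⟨fun a => if a ∈ A then mA a else (hS.mov_nonempty ℓ a).some, fun a => ?_,
    fun a ha => if_pos ha⟩
  dsimp only
  split_ifs with ha
  exacts [hmA a ha, (hS.mov_nonempty ℓ a).some_mem]

theorem next_nonempty (hS : S.Serial) {ℓ : Loc} {mA : Agt → M} (hmA : ∀ a ∈ A, mA a ∈ S.mov ℓ a) :
    (S.Next ℓ A mA).Nonempty := by
  obtain ⟨m, hm, h_eq⟩ := hS.exists_validMove_eqOn hmA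
  obtain ⟨x, hx⟩ := hS.step_nonempty ℓ m hm
  exact ⟨x, m, hm, h_eq, hx⟩

theorem exists_out (hS : S.Serial) {F : Strat Agt Loc M} (hF : S.StratValid A F) (ℓ : Loc) :
    ∃ ρ, S.Out A ℓ F ρ := by
  have h_next : ∀ h x, ∃ y ∈ S.Next x A (F h x), True := fun h x =>
    (hS.next_nonempty (hF h x)).imp fun _ hy => ⟨hy, trivial⟩
  exact (exists_out_of_forall_exists_next h_next ℓ).imp fun _ hρ => hρ.1

theorem exists_stratValid (hS : S.Serial) (A : Set Agt) : ∃ F, S.StratValid A F :=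
  ⟨fun _ ℓ a => (hS.mov_nonempty ℓ a).some, fun _ ℓ a _ => (hS.mov_nonempty ℓ a).some_mem⟩

theorem exists_move_of_cpre (hS : S.Serial) (A : Set Agt) (T : Set Loc) :
    ∃ m : Loc → Agt → M, (∀ ℓ, ∀ a ∈ A, m ℓ a ∈ S.mov ℓ a) ∧
      ∀ ℓ ∈ S.CPre A T, S.Next ℓ A (m ℓ) ⊆ T := by
  have pointwise (ℓ : Loc) : ∃ mA : Agt → M, (∀ a ∈ A, mA a ∈ S.mov ℓ a) ∧
      (ℓ ∈ S.CPre A T → S.Next ℓ A mA ⊆ T) := by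
    by_cases hℓ : ℓ ∈ S.CPre A T
    · obtain ⟨mA, h_valid, h_next⟩ := hℓ
      exact ⟨mA, h_valid, fun _ => h_next⟩
    · obtain ⟨F, hF⟩ := hS.exists_stratValid A
      exact ⟨F [] ℓ, hF [] ℓ, fun h => absurd h hℓ⟩
  choose m h_valid h_next using pointwise
  exact ⟨m, h_valid, h_next⟩

/- The initial location of a play can be read off its history, so the strategies for the various
initial locations combine into one. -/
theorem exists_strat_of_enforce (hS : S.Serial) (A : Set Agt) (Q : Set (ℕ → Loc)) :
    ∃ F, S.StratValid A F ∧ ∀ ℓ ∈ S.Enforce A Q, ∀ ρ, S.Out A ℓ F ρ → ρ ∈ Q := by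
  have pointwise (ℓ : Loc) : ∃ F, S.StratValid A F ∧
      (ℓ ∈ S.Enforce A Q → ∀ ρ, S.Out A ℓ F ρ → ρ ∈ Q) := by
    by_cases hℓ : ℓ ∈ S.Enforce A Q
    · obtain ⟨F, hF, hQ⟩ := hℓ
      exact ⟨F, hF, fun _ => hQ⟩
    · obtain ⟨F, hF⟩ := hS.exists_stratValid A
      exact ⟨F, hF, fun h => absurd h hℓ⟩
  choose F hF hQ using pointwise
  refine ⟨fun h x => F (h.headD x) h x, fun h x => hF _ h x, ?_⟩
  rintro _ hℓ ρ ⟨rfl, hρ⟩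
  refine hQ _ hℓ ρ ⟨rfl, fun i => ?_⟩
  simpa only [headD_hist] using hρ i

theorem enforce_initial_inter (hS : S.Serial) (A : Set Agt) (p : Set Loc) (Q : Set (ℕ → Loc)) :
    S.Enforce A ({ρ | ρ 0 ∈ p} ∩ Q) = p ∩ S.Enforce A Q := by
  ext ℓ
  constructor
  · rintro ⟨F, hF, hQ⟩
    obtain ⟨ρ, hρ⟩ := hS.exists_out hF ℓ
    exact ⟨hρ.1 ▸ (hQ ρ hρ).1, F, hF, fun ρ hρ => (hQ ρ hρ).2⟩
  · rintro ⟨hp, F, hF, hQ⟩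
    exact ⟨F, hF, fun ρ hρ => ⟨show ρ 0 ∈ p from hρ.1 ▸ hp, hQ ρ hρ⟩⟩

theorem enforce_initial_union (hS : S.Serial) (A : Set Agt) (p : Set Loc) (Q : Set (ℕ → Loc)) :
    S.Enforce A ({ρ | ρ 0 ∈ p} ∪ Q) = p ∪ S.Enforce A Q := by
  ext ℓ
  constructor
  · rintro ⟨F, hF, hQ⟩
    exact or_iff_not_imp_left.2 fun hp =>
      ⟨F, hF, fun ρ hρ => (hQ ρ hρ).resolve_left fun h => hp (hρ.1 ▸ h)⟩
  · rintro (hp | ⟨F, hF, hQ⟩)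
    · obtain ⟨F, hF⟩ := hS.exists_stratValid A
      exact ⟨F, hF, fun ρ hρ => Or.inl (show ρ 0 ∈ p from hρ.1 ▸ hp)⟩
    · exact ⟨F, hF, fun ρ hρ => Or.inr (hQ ρ hρ)⟩

theorem enforce_initial (hS : S.Serial) (A : Set Agt) (p : Set Loc) :
    S.Enforce A {ρ | ρ 0 ∈ p} = p := by
  have enforce_univ : S.Enforce A Set.univ = Set.univ :=
    Set.eq_univ_of_forall fun _ =>
      (hS.exists_stratValid A).imp fun _ hF => ⟨hF, fun _ _ => Set.mem_univ _⟩
  simpa only [enforce_univ, Set.inter_univ] using hS.enforce_initial_inter A p Set.univ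

theorem enforce_preimage_tail (hS : S.Serial) (A : Set Agt) (Q : Set (ℕ → Loc)) :
    S.Enforce A (tail ⁻¹' Q) = S.CPre A (S.Enforce A Q) := by
  refine (enforce_preimage_tail_subset A Q).antisymm fun ℓ hℓ => ?_
  obtain ⟨m, h_valid, h_next⟩ := hS.exists_move_of_cpre A (S.Enforce A Q)
  obtain ⟨F, hF, hQ⟩ := hS.exists_strat_of_enforce A Q
  let mThenF : Strat Agt Loc M
    | [], x => m x
    | _ :: h, x => F h x
  refine ⟨mThenF, fun h x => ?_, fun ρ hρ => ?_⟩
  · cases h with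
    | nil => exact h_valid x
    | cons _ h => exact hF h x
  · obtain ⟨-, h_first, h_tail⟩ := out_iff_out_tail.1 hρ
    exact hQ (ρ 1) (h_next ℓ hℓ h_first) (tail ρ) h_tail

end Serial

theorem untilPaths_eq (p q : Set Loc) :
    untilPaths p q = {ρ | ρ 0 ∈ q} ∪ ({ρ | ρ 0 ∈ p} ∩ tail ⁻¹' untilPaths p q) := by
  ext ρ
  constructor
  · rintro ⟨_ | i, hq, hp⟩
    · exact Or.inl hq
    · exact Or.inr ⟨hp 0 i.succ_pos, i, hq, fun j hj => hp (j + 1) (Nat.succ_lt_succ hj)⟩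
  · rintro (hq | ⟨hp₀, i, hq, hp⟩)
    · exact ⟨0, hq, fun j hj => absurd hj j.not_lt_zero⟩
    · refine ⟨i + 1, hq, fun j hj => ?_⟩
      cases j with
      | zero => exact hp₀
      | succ j => exact hp j (Nat.lt_of_succ_lt_succ hj)

theorem releasePaths_eq (q p : Set Loc) :
    releasePaths q p = {ρ | ρ 0 ∈ p} ∩ ({ρ | ρ 0 ∈ q} ∪ tail ⁻¹' releasePaths q p) := by
  ext ρ
  have h := Set.ext_iff.1 (untilPaths_eq qᶜ pᶜ) ρ
  simp only [Set.mem_union, Set.mem_inter_iff, Set.mem_preimage, Set.mem_compl_iff, releasePaths,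
    Set.mem_ofPred_eq] at h ⊢
  tauto

namespace Serial

theorem enforce_untilPaths (hS : S.Serial) (A : Set Agt) (p q : Set Loc) :
    S.Enforce A (untilPaths p q) = (S.untilStep A p q).lfp := by
  have fixed : S.untilStep A p q (S.Enforce A (untilPaths p q)) = S.Enforce A (untilPaths p q) := by
    conv_rhs => rw [untilPaths_eq, hS.enforce_initial_union, hS.enforce_initial_inter,
      hS.enforce_preimage_tail]
    rfl
  refine le_antisymm (OrderHom.le_lfp _ fun T hT ℓ hℓ => ?_) (OrderHom.lfp_le _ fixed.le)
  by_contra hℓT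
  obtain ⟨F, hF, hU⟩ := hℓ
  have escape (h : List Loc) (x : Loc) :
      ∃ y ∈ S.Next x A (F h x), x ∈ p → x ∉ T → y ∉ T := by
    by_cases h_next : S.Next x A (F h x) ⊆ T
    · obtain ⟨y, hy⟩ := hS.next_nonempty (hF h x)
      exact ⟨y, hy, fun hp hxT => absurd (hT (Or.inr ⟨hp, F h x, hF h x, h_next⟩)) hxT⟩
    · obtain ⟨y, hy, hyT⟩ := Set.not_subset.1 h_next
      exact ⟨y, hy, fun _ _ => hyT⟩
  obtain ⟨ρ, hρ, h_escape⟩ := exists_out_of_forall_exists_next escape ℓ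
  obtain ⟨i, hq, hp⟩ := hU ρ hρ
  have avoids (j : ℕ) (hj : j ≤ i) : ρ j ∉ T := by
    induction j with
    | zero => exact hρ.1.symm ▸ hℓT
    | succ j ih => exact h_escape j (hp j hj) (ih (Nat.le_of_succ_le hj))
  exact avoids i le_rfl (hT (Or.inl hq))

theorem enforce_releasePaths (hS : S.Serial) (A : Set Agt) (q p : Set Loc) :
    S.Enforce A (releasePaths q p) = (S.releaseStep A q p).gfp := by
  have fixed : S.releaseStep A q p (S.Enforce A (releasePaths q p)) =
      S.Enforce A (releasePaths q p) := by
    conv_rhs => rw [releasePaths_eq, hS.enforce_initial_inter, hS.enforce_initial_union,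
      hS.enforce_preimage_tail]
    rfl
  refine le_antisymm (OrderHom.le_gfp _ fixed.ge) (OrderHom.gfp_le _ fun T hT ℓ hℓ => ?_)
  obtain ⟨m, h_valid, h_next⟩ := hS.exists_move_of_cpre A T
  refine ⟨fun _ => m, fun _ => h_valid, fun ρ hρ => ?_⟩
  rintro ⟨i, hp, hq⟩
  have stays (j : ℕ) (hj : j ≤ i) : ρ j ∈ T := by
    induction j with
    | zero => exact hρ.1.symm ▸ hℓ
    | succ j ih =>
      have cpre : ρ j ∈ S.CPre A T := (hT (ih (Nat.le_of_succ_le hj))).2.resolve_left (hq j hj)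
      exact h_next _ cpre (hρ.2 j)
  exact hp (hT (stays i le_rfl)).1

theorem satSet_coal_nxt (hS : S.Serial) (A : Set Agt) (φ : SForm Agt P) :
    SatSet S (.coal A (.nxt φ)) = S.CPre A (SatSet S φ) := by
  conv_rhs => rw [← hS.enforce_initial A (SatSet S φ), ← hS.enforce_preimage_tail]
  simp only [SatSet, SSat, PSat, Enforce, tail, Set.preimage, Set.mem_ofPred_eq, zero_add]

theorem satSet_coal_untl (hS : S.Serial) (A : Set Agt) (φ ψ : SForm Agt P) :
    SatSet S (.coal A (.untl φ ψ)) = (S.untilStep A (SatSet S φ) (SatSet S ψ)).lfp := by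
  rw [← hS.enforce_untilPaths]
  simp only [SatSet, SSat, PSat, Enforce, untilPaths, Set.mem_ofPred_eq]

theorem satSet_coal_rel (hS : S.Serial) (A : Set Agt) (φ ψ : SForm Agt P) :
    SatSet S (.coal A (.rel φ ψ)) = (S.releaseStep A (SatSet S φ) (SatSet S ψ)).gfp := by
  rw [← hS.enforce_releasePaths]
  simp only [SatSet, SSat, PForm.rel, PSat, Enforce, releasePaths, untilPaths, Set.mem_compl_iff,
    Set.mem_ofPred_eq]

theorem satSet_coalG (hS : S.Serial) (A : Set Agt) (φ : OForm Agt P) :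
    SatSet S (OForm.coalG A φ).toS = (S.releaseStep A ∅ (SatSet S φ.toS)).gfp := by
  rw [← hS.enforce_releasePaths]
  simp only [OForm.toS, SatSet, SSat, PSat, Enforce, releasePaths, untilPaths, Set.mem_compl_iff,
    Set.mem_ofPred_eq, Set.compl_empty, Set.mem_univ]

end Serial

end GS

/-- One round of a matrix game: whoever controls the rows (if `R`) and the columns (if `C`) can
choose these so that `W` holds however the uncontrolled coordinates are chosen. -/
def MatrixForces (R C : Prop) (rows cols : Finset ℕ) (W : ℕ → ℕ → Prop) : Prop :=
  ∃ r ∈ rows, ∃ c ∈ cols, ∀ r' ∈ rows, ∀ c' ∈ cols, (R → r' = r) → (C → c' = c) → W r' c'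

theorem MatrixForces.mono {R C : Prop} {rows cols : Finset ℕ} {W W' : ℕ → ℕ → Prop}
    (hW : ∀ r c, W r c → W' r c) (h : MatrixForces R C rows cols W) :
    MatrixForces R C rows cols W' := by
  obtain ⟨r, hr, c, hc, h⟩ := h
  exact ⟨r, hr, c, hc, fun r' hr' c' hc' hR hC => hW r' c' (h r' hr' c' hc' hR hC)⟩

namespace CGS

variable {Agt Loc P : Type} {G : CGS Agt Loc P}

theorem WellFormed.serial (hG : G.WellFormed) : G.toGS.Serial where
  mov_nonempty := hG
  step_nonempty _ _ _ := Set.singleton_nonempty _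

theorem WellFormed.mem_cpre_iff_matrixForces (hG : G.WellFormed) {α β : Agt} (hαβ : α ≠ β)
    {ℓ : Loc} {out : ℕ → ℕ → Loc} (h_edg : ∀ m, G.edg ℓ m = out (m α) (m β)) (B : Set Agt)
    (T : Set Loc) :
    ℓ ∈ G.toGS.CPre B T ↔
      MatrixForces (α ∈ B) (β ∈ B) (G.chc ℓ α) (G.chc ℓ β) (fun r c => out r c ∈ T) := by
  classical
  have validMove_update {m : Agt → ℕ} (hm : G.toGS.ValidMove ℓ m) {x : Agt} {k : ℕ}
      (hk : k ∈ G.chc ℓ x) : G.toGS.ValidMove ℓ (Function.update m x k) := fun y => by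
    rcases eq_or_ne y x with rfl | hy
    · rw [Function.update_self]
      exact hk
    · rw [Function.update_of_ne hy]
      exact hm y
  constructor
  · rintro ⟨mB, h_valid, h_next⟩
    obtain ⟨m, hm, hmB⟩ := hG.serial.exists_validMove_eqOn h_valid
    refine ⟨m α, hm α, m β, hm β, fun r hr c hc hα hβ => ?_⟩
    let m' := Function.update (Function.update m α r) β c
    have edg_m' : G.edg ℓ m' = out r c := by simp [h_edg, m', hαβ]
    refine h_next ⟨m', validMove_update (validMove_update hm hr) hc, fun x hx => ?_, edg_m'.symm⟩
    rw [← hmB x hx]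
    rcases eq_or_ne x β with rfl | hxβ
    · simp [m', hβ hx]
    rcases eq_or_ne x α with rfl | hxα
    · simp [m', hxβ, hα hx]
    · simp [m', hxβ, hxα]
  · rintro ⟨r, hr, c, hc, h⟩
    choose m hm using hG ℓ
    let mB := Function.update (Function.update m α r) β c
    have mB_valid : G.toGS.ValidMove ℓ mB := validMove_update (validMove_update hm hr) hc
    refine ⟨mB, fun x _ => mB_valid x, ?_⟩
    rintro _ ⟨m', hm', h_eq, rfl⟩
    rw [h_edg]
    refine h _ (hm' α) _ (hm' β) (fun hα => ?_) (fun hβ => ?_)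
    · simp [h_eq α hα, mB, hαβ]
    · simp [h_eq β hβ, mB]

end CGS

/-- The matrix with rows `(self, sink)`, `(prev, goal)` and `(self, goal)`. The first two rows are
the choices at every stage of the chain game, the third is the bonus row of its last stage. -/
def stageMatrix {X : Type*} (self prev sink goal : X) : ℕ → ℕ → X
  | 0, 0 => self
  | 0, _ => sink
  | 1, 0 => prev
  | 1, _ => goal
  | _, 0 => self
  | _, _ => goal

theorem apply_stageMatrix {X Y : Type*} (f : X → Y) (self prev sink goal : X) (r c : ℕ) :
    f (stageMatrix self prev sink goal r c) =
      stageMatrix (f self) (f prev) (f sink) (f goal) r c := by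
  unfold stageMatrix
  split <;> rfl

/-- The coalition controlling the rows (if `R`) and the columns (if `C`) can force a true entry of
the matrix with rows `(self, sink)` and `(prev, goal)`. -/
def StageForces (R C self prev sink goal : Prop) : Prop :=
  MatrixForces R C (Finset.range 2) (Finset.range 2) (stageMatrix self prev sink goal)

theorem stageForces_monotone_prev (R C self sink goal : Prop) :
    Monotone fun prev => StageForces R C self prev sink goal := by
  intro prev prev' h
  refine MatrixForces.mono fun r c => ?_
  unfold stageMatrix
  split <;> first | exact id | exact h

theorem StageForces.prev_or_sink {R C self prev sink goal : Prop} (hC : ¬ C)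
    (h : StageForces R C self prev sink goal) : prev ∨ sink := by
  obtain ⟨r, hr, _, _, h⟩ := h
  have entry (c : ℕ) (hc : c ∈ Finset.range 2) : stageMatrix self prev sink goal r c :=
    h r hr c hc (fun _ => rfl) (fun h => absurd h hC)
  obtain rfl | rfl : r = 0 ∨ r = 1 := by have := Finset.mem_range.1 hr; omega
  · exact Or.inr (entry 1 (by simp))
  · exact Or.inl (entry 0 (by simp))

/- Under the hypothesis the bonus row is dominated by the second row or by the first one. -/
theorem matrixForces_range_three_iff {R C self prev sink goal : Prop}
    (h : (self → prev) ∨ (goal → sink)) :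
    MatrixForces R C (Finset.range 3) (Finset.range 2) (stageMatrix self prev sink goal) ↔
      StageForces R C self prev sink goal := by
  by_cases hR : R <;> by_cases hC : C <;>
    simp [StageForces, MatrixForces, Finset.range_add_one, stageMatrix, hR, hC] <;> tauto

/-- The locations of the chain game: stages `0, …, N` and the goal. Stage `0` is the sink. -/
inductive ChainLoc (N : ℕ) : Type
  | stage (i : Fin (N + 1))
  | goal
  deriving Fintype

namespace ChainLoc

variable {N : ℕ}

/-- The losing location. -/
abbrev sink : ChainLoc N := stage 0

/-- The last stage, the only one from which `a R b` can be enforced. -/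
abbrev top : ChainLoc N := stage (Fin.last N)

/-- Membership in `T` is the same at all stages from the `k`-th on. -/
def StableFrom (k : ℕ) (T : Set (ChainLoc N)) : Prop :=
  ∀ i : Fin (N + 1), k ≤ i → (stage i ∈ T ↔ top ∈ T)

theorem StableFrom.mono {k k' : ℕ} {T : Set (ChainLoc N)} (hT : StableFrom k T) (hk : k ≤ k') :
    StableFrom k' T :=
  fun i hi => hT i (hk.trans hi)

theorem stableFrom_succ_of_recurrence {k : ℕ} {T : Set (ChainLoc N)} {f : Prop → Prop}
    (hf : Monotone f)
    (hT : ∀ j : Fin N, k ≤ j → (stage j.succ ∈ T ↔ f (stage j.castSucc ∈ T))) :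
    StableFrom (k + 1) T := by
  intro i hi
  have hk : k < N := by omega
  let base : ChainLoc N := stage (Fin.castSucc ⟨k, hk⟩)
  have eq_apply_base (j : Fin (N + 1)) : k + 1 ≤ j → (stage j ∈ T ↔ f (base ∈ T)) := by
    induction j using Fin.induction with
    | zero => intro h; simp at h
    | succ j ih =>
      intro h
      rw [hT j (by simpa using h)]
      rcases (show k ≤ j by simpa using h).eq_or_lt with rfl | hkj
      · rfl
      · rw [ih hkj, monotone_prop_idempotent hf]
  rw [eq_apply_base i hi, eq_apply_base (Fin.last N) (by simpa using hk)]

end ChainLoc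

open ChainLoc

/-- The chain game, in which `α` tries to enforce `a R b` against `β`. At a stage, `α` picks a row
and `β` a column of `stageMatrix`; only the last stage has the bonus row. All other agents, and all
agents in the sink and in the goal, have moves without effect. -/
noncomputable def chainGame {Agt P : Type} (α β : Agt) (a b : P) (N : ℕ) :
    CGS Agt (ChainLoc N) P where
  lab
    | .stage i => {p | p = b ∧ i ≠ 0}
    | .goal => {a, b}
  chc ℓ x := open Classical in
    if ℓ = top ∧ x = α then Finset.range 3 else Finset.range 2
  edg
    | .stage i, m =>
      i.cases sink fun j => stageMatrix (stage j.succ) (stage j.castSucc) sink goal (m α) (m β)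
    | .goal, _ => sink

namespace chainGame

variable {Agt P : Type} {α β : Agt} {a b : P} {N : ℕ}

theorem wellFormed : (chainGame α β a b N).WellFormed := by
  intro ℓ x
  simp only [chainGame]
  split_ifs <;> simp

theorem stage_succ_mem_cpre_iff (hαβ : α ≠ β) (B : Set Agt) {T : Set (ChainLoc N)} {j : Fin N}
    (h_top : stage j.succ = top →
      (stage j.succ ∈ T → stage j.castSucc ∈ T) ∨ (goal ∈ T → sink ∈ T)) :
    stage j.succ ∈ (chainGame α β a b N).toGS.CPre B T ↔
      StageForces (α ∈ B) (β ∈ B) (stage j.succ ∈ T) (stage j.castSucc ∈ T) (sink ∈ T)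
        (goal ∈ T) := by
  rw [wellFormed.mem_cpre_iff_matrixForces hαβ
    (out := stageMatrix (stage j.succ) (stage j.castSucc) sink goal) (fun _ => rfl)]
  simp only [apply_stageMatrix (· ∈ T)]
  by_cases hj : stage j.succ = (top : ChainLoc N)
  · simpa [chainGame, hj, hαβ.symm] using matrixForces_range_three_iff (h_top hj)
  · simp only [chainGame, hj, false_and, if_false]
    rfl

theorem top_succ_mem_cpre {N : ℕ} {A : Set Agt} (hα : α ∈ A) (hβ : β ∉ A)
    {T : Set (ChainLoc (N + 1))} (h_top : top ∈ T) (h_goal : goal ∈ T) :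
    top ∈ (chainGame α β a b (N + 1)).toGS.CPre A T := by
  have hαβ : α ≠ β := fun h => hβ (h ▸ hα)
  refine (wellFormed.mem_cpre_iff_matrixForces hαβ
    (out := stageMatrix top (stage (Fin.last N).castSucc) sink goal) (fun _ => rfl) A T).2 ?_
  refine ⟨2, by simp [chainGame], 0, by simp [chainGame, hαβ.symm], fun r _ c _ hr _ => ?_⟩
  obtain rfl := hr hα
  cases c
  exacts [h_top, h_goal]

theorem sink_mem_of_goal_mem_cpre {B : Set Agt} {T : Set (ChainLoc N)}
    (h : goal ∈ (chainGame α β a b N).toGS.CPre B T) : sink ∈ T := by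
  obtain ⟨mB, h_valid, h_next⟩ := h
  obtain ⟨_, m, hm, h_eq, rfl⟩ := wellFormed.serial.next_nonempty h_valid
  exact h_next ⟨m, hm, h_eq, rfl⟩

theorem stableFrom_cpre (hαβ : α ≠ β) (B : Set Agt) {k : ℕ} {T : Set (ChainLoc N)}
    (hT : StableFrom k T) : StableFrom (k + 1) ((chainGame α β a b N).toGS.CPre B T) := by
  let v : Prop := StageForces (α ∈ B) (β ∈ B) (top ∈ T) (top ∈ T) (sink ∈ T) (goal ∈ T)
  refine stableFrom_succ_of_recurrence (f := fun _ => v) monotone_const fun j hj => ?_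
  have h_self : stage j.succ ∈ T ↔ top ∈ T := hT _ (by simp; omega)
  have h_prev : stage j.castSucc ∈ T ↔ top ∈ T := hT _ hj
  rw [stage_succ_mem_cpre_iff hαβ B fun _ => Or.inl (h_self.trans h_prev.symm).1, h_self, h_prev]

theorem stableFrom_until (hαβ : α ≠ β) (B : Set Agt) {k : ℕ} {p q : Set (ChainLoc N)}
    (hp : StableFrom k p) (hq : StableFrom k q) :
    StableFrom (k + 1) ((chainGame α β a b N).toGS.untilStep B p q).lfp := by
  set U := ((chainGame α β a b N).toGS.untilStep B p q).lfp
  let f (prev : Prop) : Prop :=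
    top ∈ q ∨ top ∈ p ∧ StageForces (α ∈ B) (β ∈ B) False prev (sink ∈ U) (goal ∈ U)
  have f_monotone : Monotone f := fun _ _ h =>
    Or.imp_right (And.imp_right (stageForces_monotone_prev _ _ _ _ _ h))
  refine stableFrom_succ_of_recurrence f_monotone fun j hj => ?_
  have h_self : stage j.succ ∉ U \ {stage j.succ} := fun h => h.2 rfl
  calc stage j.succ ∈ U
      ↔ stage j.succ ∈ q ∨ stage j.succ ∈ p ∧
          stage j.succ ∈ (chainGame α β a b N).toGS.CPre B (U \ {stage j.succ}) :=
        mem_lfp_iff_mem_map_diff_singleton _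
    _ ↔ f (stage j.castSucc ∈ U) := by
        rw [stage_succ_mem_cpre_iff hαβ B fun _ => Or.inl fun h => absurd h h_self,
          hp _ (by simp; omega), hq _ (by simp; omega)]
        simp [f, Fin.castSucc_lt_succ.ne, (Fin.succ_ne_zero j).symm]

theorem stableFrom_globally (hαβ : α ≠ β) (B : Set Agt) {k : ℕ} {p : Set (ChainLoc N)}
    (hp : StableFrom k p) :
    StableFrom (k + 1) ((chainGame α β a b N).toGS.releaseStep B ∅ p).gfp := by
  set V := ((chainGame α β a b N).toGS.releaseStep B ∅ p).gfp with hV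
  let f (prev : Prop) : Prop :=
    top ∈ p ∧ StageForces (α ∈ B) (β ∈ B) True prev (sink ∈ V) (goal ∈ V)
  have f_monotone : Monotone f := fun _ _ h =>
    And.imp_right (stageForces_monotone_prev _ _ _ _ _ h)
  have goal_imp_sink (h : goal ∈ V) : sink ∈ V := by
    rw [hV, ← OrderHom.map_gfp] at h
    exact sink_mem_of_goal_mem_cpre (h.2.resolve_left (Set.notMem_empty _))
  refine stableFrom_succ_of_recurrence f_monotone fun j hj => ?_
  have goal_imp_sink_insert (h : goal ∈ insert (stage j.succ) V) :
      sink ∈ insert (stage j.succ) V :=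
    Or.inr (goal_imp_sink (Set.mem_of_mem_insert_of_ne h (by simp)))
  calc stage j.succ ∈ V
      ↔ stage j.succ ∈ p ∧ (stage j.succ ∈ ∅ ∨
          stage j.succ ∈ (chainGame α β a b N).toGS.CPre B (insert (stage j.succ) V)) :=
        mem_gfp_iff_mem_map_insert _
    _ ↔ f (stage j.castSucc ∈ V) := by
        rw [stage_succ_mem_cpre_iff hαβ B fun _ => Or.inr goal_imp_sink_insert,
          hp _ (by simp; omega)]
        simp [f, Fin.castSucc_lt_succ.ne, (Fin.succ_ne_zero j).symm]

theorem stableFrom_satSet (hαβ : α ≠ β) (θ : OForm Agt P) :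
    StableFrom θ.size (SatSet (chainGame α β a b N).toGS θ.toS) := by
  induction θ with
  | tru => exact fun _ _ => Iff.rfl
  | atom p =>
    intro i hi
    have hi₀ : i ≠ 0 := by rintro rfl; simp [OForm.size] at hi
    have hN₀ : Fin.last N ≠ 0 := (Fin.pos_of_ne_zero hi₀).trans_le i.le_last |>.ne'
    simp [SatSet, OForm.toS, SSat, CGS.toGS, chainGame, hi₀, hN₀]
  | onot φ ihφ => exact fun i hi => not_congr (ihφ i (le_of_add_le_right hi))
  | oor φ ψ ihφ ihψ =>
    simp only [OForm.size]
    exact fun i hi => or_congr (ihφ i (by omega)) (ihψ i (by omega))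
  | coalX B φ ihφ =>
    rw [OForm.toS, wellFormed.serial.satSet_coal_nxt]
    exact (stableFrom_cpre hαβ B ihφ).mono (by simp only [OForm.size]; omega)
  | coalG B φ ihφ =>
    rw [wellFormed.serial.satSet_coalG]
    exact (stableFrom_globally hαβ B ihφ).mono (by simp only [OForm.size]; omega)
  | coalU B φ ψ ihφ ihψ =>
    rw [OForm.toS, wellFormed.serial.satSet_coal_untl]
    have hφ := ihφ.mono (Nat.le_add_right φ.size ψ.size)
    have hψ := ihψ.mono (Nat.le_add_left ψ.size φ.size)
    exact (stableFrom_until hαβ B hφ hψ).mono (by simp only [OForm.size]; omega)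

variable {A : Set Agt}

theorem top_succ_mem_satSet_rel (hα : α ∈ A) (hβ : β ∉ A) :
    top ∈ SatSet (chainGame α β a b (N + 1)).toGS (.coal A (.rel (.atom a) (.atom b))) := by
  rw [wellFormed.serial.satSet_coal_rel]
  suffices h : {top, goal} ≤ ((chainGame α β a b (N + 1)).toGS.releaseStep A _ _).gfp from
    h (Set.mem_insert _ _)
  refine OrderHom.le_gfp _ ?_
  rintro _ (rfl | rfl)
  · have b_top : b ∈ (chainGame α β a b (N + 1)).lab top := ⟨rfl, Fin.last_pos.ne'⟩
    exact ⟨b_top, Or.inr (top_succ_mem_cpre hα hβ (by simp) (by simp))⟩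
  · exact ⟨Set.mem_insert_of_mem a rfl, Or.inl (Set.mem_insert a _)⟩

theorem stage_notMem_satSet_rel (hαβ : α ≠ β) (hβ : β ∉ A) (hab : a ≠ b) (i : Fin (N + 1))
    (hi : i ≠ Fin.last N) :
    stage i ∉ SatSet (chainGame α β a b N).toGS (.coal A (.rel (.atom a) (.atom b))) := by
  rw [wellFormed.serial.satSet_coal_rel]
  set V := ((chainGame α β a b N).toGS.releaseStep A _ _).gfp
  have mem_V_iff (ℓ : ChainLoc N) : ℓ ∈ V ↔ b ∈ (chainGame α β a b N).lab ℓ ∧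
      (a ∈ (chainGame α β a b N).lab ℓ ∨ ℓ ∈ (chainGame α β a b N).toGS.CPre A V) :=
    Set.ext_iff.1 (OrderHom.map_gfp _).symm ℓ
  have sink_notMem : sink ∉ V := fun h => ((mem_V_iff _).1 h).1.2 rfl
  induction i using Fin.induction with
  | zero => exact sink_notMem
  | succ j ih =>
    intro h
    have h_cpre := ((mem_V_iff _).1 h).2.resolve_left fun ha => hab ha.1
    have not_top : stage j.succ ≠ (top : ChainLoc N) := fun h => hi (stage.inj h)
    rw [stage_succ_mem_cpre_iff hαβ A fun h => absurd h not_top] at h_cpre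
    exact (h_cpre.prev_or_sink hβ).elim (ih (Fin.castSucc_ne_last j)) sink_notMem

end chainGame

theorem no_ATLorig_formula_for_release_general {Agt P : Type} {A : Set Agt} (hA : A.Nonempty)
    (hA' : A ≠ Set.univ) {a b : P} (hab : a ≠ b) :
    ¬ ∃ θ : OForm Agt P, ∀ (Loc : Type) [Fintype Loc] (G : CGS Agt Loc P), G.WellFormed →
        ∀ ℓ : Loc, (OSat G.toGS θ ℓ ↔
          SSat G.toGS (.coal A (PForm.rel (.atom a) (.atom b))) ℓ) := by
  rintro ⟨θ, hθ⟩
  obtain ⟨α, hα⟩ := hA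
  obtain ⟨β, hβ⟩ := (Set.ne_univ_iff_exists_notMem A).1 hA'
  have hαβ : α ≠ β := fun h => hβ (h ▸ hα)
  have equiv := hθ _ (chainGame α β a b (θ.size + 1)) chainGame.wellFormed
  let i : Fin (θ.size + 2) := (Fin.last θ.size).castSucc
  have not_rel := chainGame.stage_notMem_satSet_rel hαβ hβ hab i (Fin.castSucc_ne_last _)
  refine not_rel ((equiv (stage i)).1 ?_)
  refine (chainGame.stableFrom_satSet hαβ θ i le_rfl).2 ?_
  exact (equiv top).2 (chainGame.top_succ_mem_satSet_rel hα hβ)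

/-! ### Statement 0

There is no ATLorig formula equivalent, over all concurrent game structures, to
the ATL formula `⟨A⟩(a R b)`.  Following the paper we take two players
`Agt = Fin 2`, two atomic propositions `a = 0`, `b = 1 : Fin 2`, and the
coalition `A = {A₁} = {0}`. -/
theorem no_ATLorig_formula_for_release :
    ¬ ∃ θ : OForm (Fin 2) (Fin 2),
        ∀ (Loc : Type) [Fintype Loc] (G : CGS (Fin 2) Loc (Fin 2)),
          G.WellFormed → ∀ ℓ : Loc,
            (OSat G.toGS θ ℓ ↔
              SSat G.toGS
                (.coal ({0} : Set (Fin 2)) (PForm.rel (.atom 0) (.atom 1))) ℓ) := by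
  exact no_ATLorig_formula_for_release_general (Set.singleton_nonempty 0)
    (fun h => by simpa using h.ge (Set.mem_univ 1)) zero_ne_one
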